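/- arXiv:1508.00050 — 2 statements merged into one kernel-verified Lean document; each statement's English description precedes it below -/
import Mathlib

section
/- Let N ⊆ Φ⁺ be a normal pattern and set Σ := rz(N). Then every normal pattern M ⊆ Φ⁺ with M ∩ Σ = ∅ satisfies M ⊆ N; in particular, N is the unique maximal element, with respect to inclusion, of the set of all normal patterns of Φ⁺ that are disjoint from Σ. -/
/-!
Height, the linear functional equal to `1` on the base, is positive on `Φ⁺`. If a normal pattern
`M` disjoint from `rz(N)` were not contained in `N`, a root `β ∈ M \ N` of maximal height would
not lie in `rz(N)`, so `β + γ ∈ Φ⁺ \ N` for some `γ ∈ Φ⁺`. Normality puts `β + γ` in `M`, yet its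
height exceeds that of `β`. The statements on `N` itself follow since `N` is disjoint from `rz(N)`
by definition.
-/

/-!
Combinatorics of closed patterns in the set of positive roots of a finite
reduced irreducible crystallographic root system with a fixed base, following
"On the characters of the Sylow p-subgroups of untwisted Chevalley groups".
-/

namespace RSP

variable {V : Type*} [AddCommGroup V]

/-- `S` is a closed pattern (relative to the ambient set `Φ` of positive
roots): for all `a, b ∈ S` with `a + b ∈ Φ` one has `a + b ∈ S`. -/
def ClosedIn (Φ S : Set V) : Prop :=
  ∀ a ∈ S, ∀ b ∈ S, a + b ∈ Φ → a + b ∈ S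

/-- `N` is a normal pattern in `Φ`: `N ⊆ Φ` and for all `a ∈ Φ`, `b ∈ N`
with `a + b ∈ Φ` one has `a + b ∈ N`. -/
def NormalPattern (Φ N : Set V) : Prop :=
  N ⊆ Φ ∧ ∀ a ∈ Φ, ∀ b ∈ N, a + b ∈ Φ → a + b ∈ N

/-- `N` is normal in `S` (relative to `Φ`): for all `a ∈ S`, `b ∈ N` with
`a + b ∈ Φ` one has `a + b ∈ N`. -/
def NormalIn (Φ S N : Set V) : Prop :=
  ∀ a ∈ S, ∀ b ∈ N, a + b ∈ Φ → a + b ∈ N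

/-- `rz(N) = {β ∈ Φ⁺ ∖ N : ∀ γ ∈ Φ⁺, β + γ ∉ Φ⁺ or β + γ ∈ N}`. -/
def rzSet (Φ N : Set V) : Set V :=
  {b | b ∈ Φ \ N ∧ ∀ c ∈ Φ, b + c ∉ Φ ∨ b + c ∈ N}

/-- `a ≺ b` iff `b - a` is a sum of one or more elements of `Φ`. -/
def prec (Φ : Set V) (a b : V) : Prop :=
  ∃ m : Multiset V, m ≠ 0 ∧ (∀ v ∈ m, v ∈ Φ) ∧ b = a + m.sum

/-- `a ≼ b` iff `a ≺ b` or `a = b`. -/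
def preceq (Φ : Set V) (a b : V) : Prop := prec Φ a b ∨ a = b

/-- The hook `h(a) = {γ ∈ Φ⁺ : a - γ ∈ Φ⁺ ∪ {0}}`. -/
def hook (Φ : Set V) (a : V) : Set V :=
  {c | c ∈ Φ ∧ (a - c ∈ Φ ∨ a - c = 0)}

/-- `n₀(a) = {a}` and `n_{i+1}(a) = {b + c : b ∈ n_i(a), c ∈ Φ⁺} ∩ Φ⁺`. -/
def nIter (Φ : Set V) (a : V) : ℕ → Set V
  | 0 => {a}
  | i + 1 => {x | x ∈ Φ ∧ ∃ b ∈ nIter Φ a i, ∃ c ∈ Φ, x = b + c}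

/-- `n(a) = ⋃_{i ≥ 1} n_i(a)`. -/
def nSet (Φ : Set V) (a : V) : Set V := ⋃ i : ℕ, nIter Φ a (i + 1)

/-- `k₀(a) = n(a)` and `k_{i+1}(a) = (rz(k_i(a)) ∖ {a}) ∪ k_i(a)`. -/
def kIter (Φ : Set V) (a : V) : ℕ → Set V
  | 0 => nSet Φ a
  | i + 1 => (rzSet Φ (kIter Φ a i) \ {a}) ∪ kIter Φ a i

/-- `k(a) = ⋃_{i ≥ 0} k_i(a)`. -/
def kSet (Φ : Set V) (a : V) : Set V := ⋃ i : ℕ, kIter Φ a i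

/-- `w₀(a) = {a}` and `w_{i+1}(a) = ⋃_{b ∈ w_i(a)} h(b)`. -/
def wIter (Φ : Set V) (a : V) : ℕ → Set V
  | 0 => {a}
  | i + 1 => ⋃ b ∈ wIter Φ a i, hook Φ b

/-- `w(a) = ⋃_{i ≥ 0} w_i(a)`. -/
def wSet (Φ : Set V) (a : V) : Set V := ⋃ i : ℕ, wIter Φ a i

/-- The closed pattern generated by `M`: the intersection of all closed
patterns containing `M`. -/
def genPattern (Φ M : Set V) : Set V :=
  ⋂₀ {S : Set V | M ⊆ S ∧ S ⊆ Φ ∧ ClosedIn Φ S}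

/-- The normal closure of `M` in a closed pattern `S`: the intersection of all
closed patterns `N` with `M ⊆ N ⊆ S` and `N ⊴ S`. -/
def normalClosure (Φ S M : Set V) : Set V :=
  ⋂₀ {N : Set V | M ⊆ N ∧ N ⊆ S ∧ ClosedIn Φ N ∧ NormalIn Φ S N}

end RSP

open scoped RealInnerProductSpace

/-- A finite reduced irreducible crystallographic root system `roots` in a real
inner product space, together with a base `base` (so that every root is a
nonnegative or nonpositive integral combination of the base). -/
structure RSB (V : Type*) [NormedAddCommGroup V] [InnerProductSpace ℝ V] where
  roots : Set V
  base : Set V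
  finite : roots.Finite
  zero_not_mem : (0 : V) ∉ roots
  span_top : Submodule.span ℝ roots = ⊤
  reduced : ∀ a ∈ roots, ∀ t : ℝ, t • a ∈ roots → t = 1 ∨ t = -1
  reflection_mem : ∀ a ∈ roots, ∀ b ∈ roots,
      b - (2 * ⟪b, a⟫ / ⟪a, a⟫) • a ∈ roots
  crystallographic : ∀ a ∈ roots, ∀ b ∈ roots,
      ∃ z : ℤ, 2 * ⟪b, a⟫ / ⟪a, a⟫ = (z : ℝ)
  irreducible : ∀ A B : Set V, A ∪ B = roots → A.Nonempty → B.Nonempty →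
      ∃ a ∈ A, ∃ b ∈ B, ⟪a, b⟫ ≠ 0
  base_subset : base ⊆ roots
  base_indep : LinearIndependent ℝ (fun x : ↥base => (x : V))
  base_decomp : ∀ a ∈ roots,
      (∃ c : V →₀ ℕ, ↑c.support ⊆ base ∧ a = c.sum fun v k => k • v) ∨
      (∃ c : V →₀ ℕ, ↑c.support ⊆ base ∧ a = -(c.sum fun v k => k • v))

/-- The set `Φ⁺` of positive roots (w.r.t. the base) of a root system. -/
def RSB.pos {V : Type*} [NormedAddCommGroup V] [InnerProductSpace ℝ V]
    (R : RSB V) : Set V :=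
  {a | a ∈ R.roots ∧ ∃ c : V →₀ ℕ, ↑c.support ⊆ R.base ∧ a = c.sum fun v k => k • v}

open RSP

/-- A height function: a linear functional that is positive on all positive roots. -/
lemma RSB.exists_height {V : Type*} [NormedAddCommGroup V] [InnerProductSpace ℝ V] (R : RSB V) :
    ∃ f : V →ₗ[ℝ] ℝ, ∀ a ∈ R.pos, 0 < f a := by
  -- Complete the base to a basis of `V` and send every basis vector to `1`.
  let B := Module.Basis.extend (show LinearIndepOn ℝ id R.base from R.base_indep)
  let f : V →ₗ[ℝ] ℝ := B.constr ℝ fun _ => (1 : ℝ)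
  have hf : ∀ v ∈ R.base, f v = 1 := by
    intro v hv
    have hv' := LinearIndepOn.subset_extend
      (show LinearIndepOn ℝ id R.base from R.base_indep) (Set.subset_univ _) hv
    have h := B.constr_basis ℝ (fun _ => (1 : ℝ)) ⟨v, hv'⟩
    rwa [Module.Basis.extend_apply_self] at h
  refine ⟨f, ?_⟩
  rintro a ⟨ha, c, hc, rfl⟩
  have hc0 : c.support.Nonempty := by
    rw [Finset.nonempty_iff_ne_empty]
    intro h
    rw [Finsupp.support_eq_empty] at h
    subst h
    exact R.zero_not_mem (by simpa using ha)
  rw [Finsupp.sum, map_sum]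
  refine Finset.sum_pos (fun v hv => ?_) hc0
  rw [map_nsmul, hf v (hc hv), nsmul_one]
  exact_mod_cast Nat.pos_of_ne_zero (Finsupp.mem_support_iff.mp hv)

/-- If `N` is a normal pattern and `Σ = rz(N)`, then every
normal pattern disjoint from `Σ` is contained in `N`; in particular `N` is the
unique maximal element (w.r.t. inclusion) of the set of normal patterns of
`Φ⁺` disjoint from `Σ`. -/
theorem normalPattern_max_of_rz
    (V : Type*) [NormedAddCommGroup V] [InnerProductSpace ℝ V]
    [FiniteDimensional ℝ V]
    (R : RSB V) (N : Set V) (hN : NormalPattern R.pos N) :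
    (∀ M : Set V, NormalPattern R.pos M → M ∩ rzSet R.pos N = ∅ → M ⊆ N) ∧
    N ∩ rzSet R.pos N = ∅ ∧
    (∀ N' : Set V, NormalPattern R.pos N' → N' ∩ rzSet R.pos N = ∅ →
      (∀ M : Set V, NormalPattern R.pos M → M ∩ rzSet R.pos N = ∅ → M ⊆ N') →
      N' = N) := by
  have hdisj : N ∩ rzSet R.pos N = ∅ := by
    ext x
    simp only [Set.mem_inter_iff, Set.mem_empty_iff_false, iff_false]
    exact fun h => h.2.1.2 h.1
  have hmax : ∀ M : Set V, NormalPattern R.pos M → M ∩ rzSet R.pos N = ∅ → M ⊆ N := by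
    intro M hM hMr
    by_contra hsub
    obtain ⟨f, hf⟩ := R.exists_height
    have hfin : (M \ N).Finite := R.finite.subset fun x hx => (hM.1 hx.1).1
    obtain ⟨b, hb, hbmax⟩ := Set.exists_max_image (M \ N) f hfin (Set.sdiff_nonempty.mpr hsub)
    have hbr : b ∉ rzSet R.pos N := fun h => by
      have hmem : b ∈ M ∩ rzSet R.pos N := ⟨hb.1, h⟩
      simp [hMr] at hmem
    obtain ⟨c, hc, hbc, hbcN⟩ : ∃ c ∈ R.pos, b + c ∈ R.pos ∧ b + c ∉ N := by
      by_contra! h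
      exact hbr ⟨⟨hM.1 hb.1, hb.2⟩, fun c hc => or_iff_not_imp_left.mpr fun hbc =>
        h c hc (not_not.mp hbc)⟩
    have hbcM : b + c ∈ M := by
      rw [add_comm] at hbc ⊢
      exact hM.2 c hc b hb.1 hbc
    have h := hbmax (b + c) ⟨hbcM, hbcN⟩
    rw [map_add] at h
    linarith [hf c hc]
  exact ⟨hmax, hdisj, fun N' hN' hd h => (hmax N' hN' hd).antisymm (h N hN hdisj)⟩
end

section
/- Let Σ ⊆ Φ⁺ be a nonempty antichain of the poset (Φ⁺, ≼), and let k(Σ) be the unique normal pattern of Φ⁺ with rz(k(Σ)) = Σ. Then: (a) k(Σ) = ⋂_{α ∈ Σ} k(α); (b) w(Σ) ∩ k(Σ) = ∅ and w(Σ) ∪ k(Σ) = Φ⁺, where w(Σ) := ⋃_{α ∈ Σ} w(α); and (c) ⋃_{α ∈ Σ} n(α) ⊆ k(Σ). -/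
open scoped RealInnerProductSpace

open RSP

namespace RSP

section

variable {V : Type*} [AddCommGroup V]

/-! ### Reachability by steps -/

/-- `x → y` is a step when `x` and `y` lie in `P` and `y - x` does too. -/
def Step (P : Set V) (x y : V) : Prop := x ∈ P ∧ y ∈ P ∧ ∃ c ∈ P, y = x + c

/-- Reachability by finitely many (possibly zero) steps. -/
abbrev Reach (P : Set V) : V → V → Prop := Relation.ReflTransGen (Step P)

variable {P : Set V}

lemma mem_wSet_iff {a : V} (ha : a ∈ P) {b : V} : b ∈ wSet P a ↔ Reach P b a ∧ b ∈ P := by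
  simp only [wSet, Set.mem_iUnion]
  constructor
  · rintro ⟨i, hi⟩
    induction i generalizing b with
    | zero =>
      obtain rfl : b = a := hi
      exact ⟨.refl, ha⟩
    | succ i ih =>
      simp only [wIter, Set.mem_iUnion] at hi
      obtain ⟨x, hx, hbP, h⟩ := hi
      obtain ⟨hr, hxP⟩ := ih hx
      refine ⟨?_, hbP⟩
      rcases h with h | h
      · exact .head ⟨hbP, hxP, x - b, h, by abel⟩ hr
      · rwa [← sub_eq_zero.mp h]
  · rintro ⟨h, -⟩
    induction h using Relation.ReflTransGen.head_induction_on with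
    | refl => exact ⟨0, rfl⟩
    | head h _ ih =>
      obtain ⟨i, hi⟩ := ih
      refine ⟨i + 1, ?_⟩
      simp only [wIter, Set.mem_iUnion]
      obtain ⟨h1, h2, c, hc, rfl⟩ := h
      exact ⟨_, hi, h1, .inl (by simpa using hc)⟩

lemma transGen_of_mem_nSet {a b : V} (ha : a ∈ P) (hb : b ∈ nSet P a) :
    Relation.TransGen (Step P) a b := by
  simp only [nSet, Set.mem_iUnion] at hb
  obtain ⟨i, hi⟩ := hb
  induction i generalizing b with
  | zero =>
    obtain ⟨hb, x, hx, c, hc, rfl⟩ := hi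
    obtain rfl : x = a := hx
    exact .single ⟨ha, hb, c, hc, rfl⟩
  | succ i ih =>
    obtain ⟨hb, x, hx, c, hc, rfl⟩ := hi
    exact .tail (ih hx) ⟨hx.1, hb, c, hc, rfl⟩

lemma NormalPattern.reach {K : Set V} (hK : NormalPattern P K) {x y : V} (h : Reach P x y)
    (hx : x ∈ K) : y ∈ K := by
  induction h with
  | refl => exact hx
  | tail _ h ih =>
    obtain ⟨-, h2, c, hc, rfl⟩ := h
    rw [add_comm] at h2 ⊢
    exact hK.2 c hc _ ih h2

/-- Induction from above: with `P` finite and `f` positive on `P`, steps terminate. -/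
lemma step_induction (hfin : P.Finite) (f : V →+ ℝ) (hf : ∀ x ∈ P, 0 < f x) {Q : V → Prop}
    (h : ∀ x ∈ P, (∀ c ∈ P, x + c ∈ P → Q (x + c)) → Q x) : ∀ x ∈ P, Q x := by
  suffices H : ∀ n : ℕ, ∀ x ∈ P, {y ∈ P | f x < f y}.ncard = n → Q x from
    fun x hx => H _ x hx rfl
  intro n
  induction n using Nat.strong_induction_on with
  | _ n ih =>
    rintro x hx rfl
    refine h x hx fun c hc hxc => ih _ ?_ _ hxc rfl
    have hlt : f x < f (x + c) := by simpa using hf c hc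
    apply Set.ncard_lt_ncard _ (hfin.subset (Set.sep_subset _ _))
    refine ⟨fun y hy => ⟨hy.1, hlt.trans hy.2⟩, fun hs => ?_⟩
    exact lt_irrefl _ (hs ⟨hxc, hlt⟩).2

lemma lt_of_transGen (f : V →+ ℝ) (hf : ∀ x ∈ P, 0 < f x) {x y : V}
    (h : Relation.TransGen (Step P) x y) : f x < f y := by
  have key : ∀ {x y : V}, Step P x y → f x < f y := by
    rintro x _ ⟨-, -, c, hc, rfl⟩
    simpa using hf c hc
  induction h with
  | single h => exact key h
  | tail _ h ih => exact ih.trans (key h)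

/-! ### The sets `k(α)` and normal patterns as complements -/

lemma kIter_mono (a : V) : Monotone (kIter P a) :=
  monotone_nat_of_le_succ fun _ => Set.subset_union_right

lemma kSet_subset (a : V) : kSet P a ⊆ P := by
  refine Set.iUnion_subset fun i => ?_
  induction i with
  | zero => exact Set.iUnion_subset fun _ _ h => h.1
  | succ i ih => exact Set.union_subset (fun _ h => h.1.1.1) ih

/-- `k(α)` is the complement of `w(α)` in the set of positive roots. -/
theorem kSet_eq (hfin : P.Finite) (f : V →+ ℝ) (hf : ∀ x ∈ P, 0 < f x) {a : V} (ha : a ∈ P) :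
    kSet P a = P \ wSet P a := by
  ext b
  constructor
  · intro hb
    refine ⟨kSet_subset a hb, fun hw => ?_⟩
    obtain ⟨i, hi⟩ := Set.mem_iUnion.mp hb
    have hr := ((mem_wSet_iff ha).mp hw).1
    clear hb hw
    induction i generalizing b with
    | zero =>
      exact lt_irrefl _ (lt_of_transGen f hf ((transGen_of_mem_nSet ha hi).trans_left hr))
    | succ i ih =>
      rcases hi with ⟨⟨-, hi⟩, hne⟩ | hi
      · rcases Relation.ReflTransGen.cases_head hr with h | ⟨x, ⟨-, hx, c, hc, rfl⟩, hr'⟩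
        · exact hne h
        · exact (hi c hc).elim (fun h => h hx) (fun h => ih _ h hr')
      · exact ih _ hi hr
  · rintro ⟨hb, hw⟩
    revert hw
    refine step_induction hfin f hf (Q := fun b => b ∉ wSet P a → b ∈ kSet P a) ?_ b hb
    intro x hx ih hw
    have hsucc : ∀ c ∈ P, ∃ i, x + c ∉ P ∨ x + c ∈ kIter P a i := by
      intro c hc
      by_cases hxc : x + c ∈ P
      · have hw' : x + c ∉ wSet P a := fun h => hw <| (mem_wSet_iff ha).mpr
          ⟨.head ⟨hx, hxc, c, hc, rfl⟩ ((mem_wSet_iff ha).mp h).1, hx⟩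
        obtain ⟨i, hi⟩ := Set.mem_iUnion.mp (ih c hc hxc hw')
        exact ⟨i, .inr hi⟩
      · exact ⟨0, .inl hxc⟩
    choose! i hi using hsucc
    -- A uniform index for the finitely many successors of `x`.
    obtain ⟨m, hm⟩ := (hfin.image i).bddAbove
    have hm' : ∀ c ∈ P, x + c ∉ P ∨ x + c ∈ kIter P a m := fun c hc =>
      (hi c hc).imp_right fun h => kIter_mono a (hm ⟨c, hc, rfl⟩) h
    refine Set.mem_iUnion.mpr ⟨m + 1, ?_⟩
    by_cases hxm : x ∈ kIter P a m
    · exact .inr hxm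
    · refine .inl ⟨⟨⟨hx, hxm⟩, hm'⟩, ?_⟩
      rintro rfl
      exact hw ((mem_wSet_iff ha).mpr ⟨.refl, ha⟩)

/-- A normal pattern is determined by its `rz`: it is the complement of the union of the `w(α)`,
`α ∈ rz(K)`. -/
theorem normalPattern_eq_diff (hfin : P.Finite) (f : V →+ ℝ) (hf : ∀ x ∈ P, 0 < f x)
    {K : Set V} (hK : NormalPattern P K) : K = P \ ⋃ a ∈ rzSet P K, wSet P a := by
  ext b
  simp only [Set.mem_sdiff, Set.mem_iUnion, exists_prop, not_exists, not_and]
  constructor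
  · refine fun hb => ⟨hK.1 hb, fun a ha hw => ha.1.2 ?_⟩
    exact hK.reach ((mem_wSet_iff ha.1.1).mp hw).1 hb
  · rintro ⟨hb, hw⟩
    have key : ∀ x ∈ P, x ∉ K → ∃ a ∈ rzSet P K, Reach P x a := by
      refine step_induction hfin f hf fun x hx ih hxK => ?_
      by_cases h : ∀ c ∈ P, x + c ∉ P ∨ x + c ∈ K
      · exact ⟨x, ⟨⟨hx, hxK⟩, h⟩, .refl⟩
      · push Not at h
        obtain ⟨c, hc, hxc, hn⟩ := h
        obtain ⟨a, ha, hr⟩ := ih c hc hxc hn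
        exact ⟨a, ha, .head ⟨hx, hxc, c, hc, rfl⟩ hr⟩
    by_contra hbK
    obtain ⟨a, ha, hr⟩ := key b hb hbK
    exact hw a ha ((mem_wSet_iff ha.1.1).mpr ⟨hr, hb⟩)

end

/-! ### The height functional -/

/-- Some additive functional is positive on the positive roots: the height, which is the sum of the
coordinates in a basis of `V` extending the base. -/
lemma exists_height {V : Type*} [NormedAddCommGroup V] [InnerProductSpace ℝ V] (R : RSB V) :
    ∃ f : V →+ ℝ, ∀ x ∈ R.pos, 0 < f x := by
  let B := Module.Basis.extend R.base_indep
  have hB : ∀ v ∈ R.base, B.sumCoords v = 1 := by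
    intro v hv
    have h := B.sumCoords_self_apply ⟨v, Module.Basis.subset_extend R.base_indep hv⟩
    rwa [show B ⟨v, _⟩ = v from Module.Basis.extend_apply_self R.base_indep _] at h
  refine ⟨B.sumCoords.toAddMonoidHom, ?_⟩
  rintro x ⟨hx, c, hc, rfl⟩
  have hc0 : c.support.Nonempty := by
    rw [Finset.nonempty_iff_ne_empty]
    intro h
    exact R.zero_not_mem (by simpa [Finsupp.sum, h] using hx)
  simp only [Finsupp.sum, LinearMap.toAddMonoidHom_coe, map_sum, map_nsmul]
  refine Finset.sum_pos (fun v hv => ?_) hc0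
  rw [hB v (hc hv)]
  have := Nat.pos_of_ne_zero (Finsupp.mem_support_iff.mp hv)
  simpa using this

end RSP

/-- Let `Σ` be a nonempty antichain of `(Φ⁺, ≼)` and let
`K = k(Σ)` be the unique normal pattern with `rz(K) = Σ`.  Then
(a) `K = ⋂_{α ∈ Σ} k(α)`;
(b) `w(Σ) ∩ K = ∅` and `w(Σ) ∪ K = Φ⁺`, where `w(Σ) = ⋃_{α ∈ Σ} w(α)`;
(c) `⋃_{α ∈ Σ} n(α) ⊆ K`. -/
theorem kSigma_properties
    (V : Type*) [NormedAddCommGroup V] [InnerProductSpace ℝ V]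
    [FiniteDimensional ℝ V]
    (R : RSB V) (S : Set V) (hS : S ⊆ R.pos) (hSne : S.Nonempty)
    (hanti : ∀ a ∈ S, ∀ b ∈ S, a ≠ b → ¬ preceq R.pos a b)
    (K : Set V) (hK : NormalPattern R.pos K) (hrz : rzSet R.pos K = S) :
    K = ⋂ a ∈ S, kSet R.pos a ∧
    (⋃ a ∈ S, wSet R.pos a) ∩ K = ∅ ∧
    (⋃ a ∈ S, wSet R.pos a) ∪ K = R.pos ∧
    (⋃ a ∈ S, nSet R.pos a) ⊆ K := by
  obtain ⟨f, hf⟩ := exists_height R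
  have hfin : R.pos.Finite := R.finite.subset fun x hx => hx.1
  have hKeq : K = R.pos \ ⋃ a ∈ S, wSet R.pos a := by
    rw [← hrz]
    exact normalPattern_eq_diff hfin f hf hK
  have hwsub : (⋃ a ∈ S, wSet R.pos a) ⊆ R.pos :=
    Set.iUnion₂_subset fun a ha x hx => ((mem_wSet_iff (hS ha)).mp hx).2
  refine ⟨?_, ?_, ?_, ?_⟩
  · have hk : (⋂ a ∈ S, kSet R.pos a) = ⋂ a ∈ S, R.pos \ wSet R.pos a :=
      Set.iInter₂_congr fun a ha => kSet_eq hfin f hf (hS ha)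
    rw [hk, hKeq]
    ext b
    simp only [Set.mem_sdiff, Set.mem_iUnion, Set.mem_iInter, exists_prop, not_exists, not_and]
    -- Nonemptiness of `S` makes the intersection a subset of the positive roots.
    obtain ⟨a₀, ha₀⟩ := hSne
    exact ⟨fun h a ha => ⟨h.1, h.2 a ha⟩, fun h => ⟨(h a₀ ha₀).1, fun a ha => (h a ha).2⟩⟩
  · rw [hKeq, Set.inter_sdiff_self]
  · rw [hKeq, Set.union_sdiff_cancel hwsub]
  · refine Set.iUnion₂_subset fun a ha x hx => ?_
    obtain ⟨y, ⟨-, hy, c, hc, rfl⟩, hr⟩ :=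
      Relation.TransGen.head'_iff.mp (transGen_of_mem_nSet (hS ha) hx)
    rw [← hrz] at ha
    exact hK.reach hr ((ha.2 c hc).resolve_left fun h => h hy)
end
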